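/- Let F be a non-normalizable term whose unique free variable is x, with x ∈ βΩ(F), and A a closed term with F[x:=A] ≄ F[x:=Ω]. Let (F_k) be a cofinal recursive reduction sequence of F, fix a good infinite branch of the associated tree, let x_(k) be the occurrence of x in F_k chosen by the branch and U_k = Arg(x_(k), F_k). If there is an integer l bounding the lengths of all the sequences U_k, then, setting A' = λx₁…λx_l λz.(z ν) for a fresh variable ν, ν occurs in every term t₁ such that F[x:=A'] ▷_{βΩ}* t₁ (i.e. ν ∈ βΩ(F[x:=A'])). -/

import Mathlib

/-! ## A de Bruijn presentation of the untyped λ-calculus -/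

/-- Untyped λ-terms in de Bruijn representation. -/
inductive Lam : Type where
  | var : ℕ → Lam
  | app : Lam → Lam → Lam
  | abs : Lam → Lam
  deriving DecidableEq

namespace Lam

/-- Lifting of de Bruijn indices (cutoff `d`). -/
def lift (d : ℕ) : Lam → Lam
  | var n => if n < d then var n else var (n + 1)
  | app a b => app (lift d a) (lift d b)
  | abs a => abs (lift (d + 1) a)

/-- Capture-avoiding substitution of `u` for the free variable `k`. -/
def subst : Lam → ℕ → Lam → Lam
  | var n, k, u => if n = k then u else if k < n then var (n - 1) else var n
  | app a b, k, u => app (subst a k u) (subst b k u)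
  | abs a, k, u => abs (subst a (k + 1) (lift 0 u))

/-- One-step β-reduction `▷`. -/
inductive Step : Lam → Lam → Prop
  | beta (a b : Lam) : Step (app (abs a) b) (subst a 0 b)
  | appL {a a' : Lam} (b : Lam) : Step a a' → Step (app a b) (app a' b)
  | appR (a : Lam) {b b' : Lam} : Step b b' → Step (app a b) (app a b')
  | abs {a a' : Lam} : Step a a' → Step (Lam.abs a) (Lam.abs a')

/-- β-reduction `▷*` : reflexive and transitive closure of `▷`. -/
def Steps : Lam → Lam → Prop := Relation.ReflTransGen Step

/-- β-normal term. -/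
def Normal (t : Lam) : Prop := ∀ t', ¬ Step t t'

/-- `Free x t` : the variable `x` (de Bruijn index, seen from the root) occurs free in `t`. -/
def Free : ℕ → Lam → Prop
  | x, var n => x = n
  | x, app a b => Free x a ∨ Free x b
  | x, abs a => Free (x + 1) a

/-- Closed term. -/
def Closed (t : Lam) : Prop := ∀ x, ¬ Free x t

/-- A variable applied to a (possibly empty) list of arguments. -/
inductive HeadVarApp : Lam → Prop
  | var (n : ℕ) : HeadVarApp (var n)
  | app {a : Lam} (b : Lam) : HeadVarApp a → HeadVarApp (app a b)

/-- Head normal forms `λx₁…λxₙ.(y t₁ … tₘ)`. -/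
inductive IsHNF : Lam → Prop
  | head {t : Lam} : HeadVarApp t → IsHNF t
  | abs {a : Lam} : IsHNF a → IsHNF (Lam.abs a)

/-- A term is solvable if it β-reduces to a head normal form. -/
def Solvable (t : Lam) : Prop := ∃ h, Steps t h ∧ IsHNF h

/-- `Ω = (λx.(x x))(λx.(x x))`. -/
def Omega : Lam := app (abs (app (var 0) (var 0))) (abs (app (var 0) (var 0)))

/-- Ω-reduction `▷_Ω` : replace an unsolvable subterm by `Ω`. -/
inductive OmegaStep : Lam → Lam → Prop
  | unsolv {t : Lam} : ¬ Solvable t → OmegaStep t Omega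
  | appL {a a' : Lam} (b : Lam) : OmegaStep a a' → OmegaStep (app a b) (app a' b)
  | appR (a : Lam) {b b' : Lam} : OmegaStep b b' → OmegaStep (app a b) (app a b')
  | abs {a a' : Lam} : OmegaStep a a' → OmegaStep (Lam.abs a) (Lam.abs a')

/-- `▷_Ω*`. -/
def OmegaSteps : Lam → Lam → Prop := Relation.ReflTransGen OmegaStep

/-- `▷_{βΩ}` : union of `▷` and `▷_Ω`. -/
def BOStep (t t' : Lam) : Prop := Step t t' ∨ OmegaStep t t'

/-- `▷_{βΩ}*`. -/
def BOSteps : Lam → Lam → Prop := Relation.ReflTransGen BOStep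

/-- `u ≃ v` : equality in the λ-theory H (common `▷_{βΩ}*`-reduct). -/
def SimH (u v : Lam) : Prop := ∃ w, BOSteps u w ∧ BOSteps v w

/-- Simultaneous (parallel) substitution along `σ`. -/
def psubst (σ : ℕ → Lam) : Lam → Lam
  | var n => σ n
  | app a b => app (psubst σ a) (psubst σ b)
  | abs a => abs (psubst (fun n => match n with | 0 => var 0 | m + 1 => lift 0 (σ m)) a)

/-- `(x V)` : the application of a head `h` to a list of arguments. -/
def mkApps (h : Lam) (as : List Lam) : Lam := as.foldl app h

/-- `U ⊑ V` : some initial segment of `V` is obtained from `U` by a substitution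
followed by componentwise β-reductions. -/
def Sqsubseteq (U V : List Lam) : Prop :=
  ∃ (σ : ℕ → Lam) (W : List Lam), W <+: V ∧
    List.Forall₂ (fun u w => Steps (psubst σ u) w) U W

/-! ### Occurrences as positions -/

/-- Directions inside a term. -/
inductive Dir : Type where
  | left | right | down
  deriving DecidableEq

/-- Positions (occurrences) in a term. -/
abbrev Pos := List Dir

/-- The subterm of `t` at position `p` (if any). -/
def subtermAt : Lam → Pos → Option Lam
  | t, [] => some t
  | app a _, Dir.left :: p => subtermAt a p
  | app _ b, Dir.right :: p => subtermAt b p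
  | abs a, Dir.down :: p => subtermAt a p
  | _, _ :: _ => none

/-- Replace the subterm of `t` at position `p` by `s` (if the position exists). -/
def replaceAt : Lam → Pos → Lam → Option Lam
  | _, [], s => some s
  | app a b, Dir.left :: p, s => (replaceAt a p s).map (fun a' => app a' b)
  | app a b, Dir.right :: p, s => (replaceAt b p s).map (fun b' => app a b')
  | abs a, Dir.down :: p, s => (replaceAt a p s).map Lam.abs
  | _, _ :: _, _ => none

/-- `OccOf x t p` : position `p` is an occurrence in `t` of the free variable `x`
(index seen from the root, hence shifted by the number of binders crossed). -/
def OccOf (x : ℕ) (t : Lam) (p : Pos) : Prop :=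
  subtermAt t p = some (var (x + p.count Dir.down))

/-- `ArgOf t p V` : `V` is the maximal list of arguments, in `t`, of the occurrence
sitting at position `p`; i.e. `([] V)` is the applicative context of that occurrence. -/
def ArgOf (t : Lam) (p : Pos) (V : List Lam) : Prop :=
  ∃ (q : Pos) (h : Lam),
    p = q ++ List.replicate V.length Dir.left ∧
    (∀ q' : Pos, q ≠ q' ++ [Dir.left]) ∧
    subtermAt t q = some (mkApps h V) ∧ subtermAt t p = some h

/-- `InArgOfOcc x t p q` : `q` is an occurrence of `x` in `t` and the position `p` lies
inside one of the elements of `Arg(x_[q], t)`. -/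
def InArgOfOcc (x : ℕ) (t : Lam) (p q : Pos) : Prop :=
  OccOf x t q ∧ ∃ (r : Pos) (n : ℕ),
    q = r ++ List.replicate n Dir.left ∧
    (∀ r' : Pos, r ≠ r' ++ [Dir.left]) ∧
    ∃ (j : ℕ) (s : Pos), j < n ∧ p = r ++ List.replicate j Dir.left ++ Dir.right :: s

/-- The occurrence `p` of `x` is pure in `t` : no other occurrence `q` of `x` in `t`
is such that `p` occurs in one of the elements of `Arg(x_[q], t)`. -/
def PureOcc (x : ℕ) (t : Lam) (p : Pos) : Prop :=
  OccOf x t p ∧ ∀ q, q ≠ p → ¬ InArgOfOcc x t p q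

/-- Renaming of the free variable `y` into `x`. -/
def rename (y x : ℕ) : Lam → Lam
  | var n => if n = y then var x else var n
  | app a b => app (rename y x a) (rename y x b)
  | abs a => abs (rename (y + 1) (x + 1) a)

/-- `Residue x u v p p'` : along some β-reduction from `u` to `v`, the occurrence `p'` of
`x` in `v` is a residue (traced copy) of the occurrence `p` of `x` in `u`.  This is
expressed by marking the occurrence `p` of `x` with a fresh variable `y` and tracing the
occurrences of `y`. -/
def Residue (x : ℕ) (u v : Lam) (p p' : Pos) : Prop :=
  ∃ (y : ℕ) (u₀ v₀ : Lam),
    ¬ Free y u ∧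
    replaceAt u p (var (y + p.count Dir.down)) = some u₀ ∧
    Steps u₀ v₀ ∧ rename y x v₀ = v ∧ OccOf y v₀ p'

/-- The occurrence `p` of the free variable `0` ("x") in `G` is good with respect to the
closed term `A` : it is pure in `G` and `u[x:=A]` is solvable for every subterm `u` of
`G` in which this occurrence occurs. -/
def GoodOcc (A G : Lam) (p : Pos) : Prop :=
  PureOcc 0 G p ∧
    ∀ (q : Pos) (u : Lam), q <+: p → subtermAt G q = some u →
      Solvable (subst u (q.count Dir.down) A)

/-! ### Miscellaneous -/

/-- A fixed effective Gödel numbering of λ-terms. -/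
def code : Lam → ℕ
  | var n => Nat.pair 0 n
  | app a b => Nat.pair 1 (Nat.pair (code a) (code b))
  | abs a => Nat.pair 2 (code a)

/-- Body `f^k z` of the Church numeral. -/
def churchBody : ℕ → Lam
  | 0 => var 0
  | k + 1 => app (var 1) (churchBody k)

/-- The Church numeral `c_k = λf λz.(f^k z)`. -/
def church (k : ℕ) : Lam := abs (abs (churchBody k))

/-- `n`-fold abstraction `λx₁…λxₙ.t`. -/
def absN : ℕ → Lam → Lam
  | 0, t => t
  | n + 1, t => abs (absN n t)

/-- Number of symbols of a term. -/
def size : Lam → ℕ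
  | var _ => 1
  | app a b => size a + size b + 1
  | abs a => size a + 1

/-- Subterm relation. -/
inductive Subterm : Lam → Lam → Prop
  | refl (t : Lam) : Subterm t t
  | appL {s a : Lam} (b : Lam) : Subterm s a → Subterm s (app a b)
  | appR (a : Lam) {s b : Lam} : Subterm s b → Subterm s (app a b)
  | abs {s a : Lam} : Subterm s a → Subterm s (Lam.abs a)

/-- `t` contains no subterm of the form `(x u)` for the free variable `x`. -/
def NoVarApp : ℕ → Lam → Prop
  | _, var _ => True
  | x, app a b => a ≠ var x ∧ NoVarApp x a ∧ NoVarApp x b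
  | x, abs a => NoVarApp (x + 1) a

/-- Headed by the variable `d` : term of the form `(x V)` with `x = var d`. -/
inductive Headed : ℕ → Lam → Prop
  | var (d : ℕ) : Headed d (var d)
  | app {d : ℕ} {a : Lam} (b : Lam) : Headed d a → Headed d (app a b)

end Lam

/-!
Suppose `t₁` is a reduct of `F[x:=A']` without `ν`.  Reductions of `F[x:=A']` can be replayed in
`F` as long as each subterm `(x V)` with at most `l` arguments is matched with the result of letting
`A'` swallow the arguments `V`, and each subterm which does not head normalise, or only to some
`λ⃗y.(x V)` with more than `l` arguments, is matched with anything; every other subterm is matched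
with a solvable one, so that Ω-steps take place inside the third kind only.  Since `t₁` does not
contain `ν`, the second kind does not occur in the reduct of `F` matched with `t₁`, and reducing the
subterms of the third kind confines every occurrence of `x` to an unsolvable subterm or to a subterm
`(x V)` with more than `l` arguments.  This property is stable under reduction, hence it reaches
some `F_k`, where it contradicts the existence of a good occurrence of `x` with at most `l`
arguments.
-/

namespace Lam

variable {A G M M' a b c s t t' u v : Lam} {B : Set ℕ} {U : List Lam} {p q r : Pos}
  {d i j k l m n x y z ν : ℕ}

/-! ### Substitution -/

theorem lift_lift (t : Lam) (hij : i ≤ j) : lift i (lift j t) = lift (j + 1) (lift i t) := by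
  induction t generalizing i j with
  | var n => grind [lift]
  | app a b iha ihb => simp only [lift, iha hij, ihb hij]
  | abs a ih => simp only [lift, ih (Nat.succ_le_succ hij)]

theorem lift_subst_of_le (t u : Lam) (hjk : j ≤ k) :
    lift j (subst t k u) = subst (lift j t) (k + 1) (lift j u) := by
  induction t generalizing j k u with
  | var n => grind [lift, subst]
  | app a b iha ihb => simp only [lift, subst, iha _ hjk, ihb _ hjk]
  | abs a ih => simp only [lift, subst, ih _ (Nat.succ_le_succ hjk), lift_lift u j.zero_le]

theorem lift_subst_of_ge (t u : Lam) (hkj : k ≤ j) :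
    lift j (subst t k u) = subst (lift (j + 1) t) k (lift j u) := by
  induction t generalizing j k u with
  | var n => grind [lift, subst]
  | app a b iha ihb => simp only [lift, subst, iha _ hkj, ihb _ hkj]
  | abs a ih => simp only [lift, subst, ih _ (Nat.succ_le_succ hkj), lift_lift u j.zero_le]

theorem subst_lift (t u : Lam) (k : ℕ) : subst (lift k t) k u = t := by
  induction t generalizing k u with
  | var n => grind [lift, subst]
  | app a b iha ihb => simp only [lift, subst, iha, ihb]
  | abs a ih => simp only [lift, subst, ih]

theorem subst_subst (t u v : Lam) (hij : i ≤ j) :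
    subst (subst t i u) j v = subst (subst t (j + 1) (lift i v)) i (subst u j v) := by
  induction t generalizing i j u v with
  | var n => grind [subst, subst_lift]
  | app a b iha ihb => simp only [subst, iha _ _ hij, ihb _ _ hij]
  | abs a ih =>
    simp only [subst, ih _ _ (Nat.succ_le_succ hij), lift_lift v i.zero_le,
      lift_subst_of_le u v j.zero_le]

/-! ### Reduction -/

theorem Steps.appL {a a' : Lam} (b : Lam) (h : Steps a a') : Steps (app a b) (app a' b) :=
  Relation.ReflTransGen.lift (fun t => app t b) (fun _ _ => Step.appL b) _ _ h

theorem Steps.appR (a : Lam) {b b' : Lam} (h : Steps b b') : Steps (app a b) (app a b') :=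
  Relation.ReflTransGen.lift (app a) (fun _ _ => Step.appR a) _ _ h

theorem Steps.app {a a' b b' : Lam} (ha : Steps a a') (hb : Steps b b') :
    Steps (Lam.app a b) (Lam.app a' b') :=
  (ha.appL b).trans (hb.appR a')

theorem Steps.abs {a a' : Lam} (h : Steps a a') : Steps (Lam.abs a) (Lam.abs a') :=
  Relation.ReflTransGen.lift Lam.abs (fun _ _ => Step.abs) _ _ h

theorem Step.steps (h : Step t u) : Steps t u := .single h

/-- One step of weak head reduction: contract the redex in head position, not below an
abstraction. -/
inductive WeakHeadStep : Lam → Lam → Prop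
  | beta (a b : Lam) : WeakHeadStep (app (abs a) b) (subst a 0 b)
  | appL {a a' : Lam} (b : Lam) : WeakHeadStep a a' → WeakHeadStep (app a b) (app a' b)

/-- Weak head reduction. -/
def WeakHeadSteps : Lam → Lam → Prop := Relation.ReflTransGen WeakHeadStep

theorem WeakHeadStep.step (h : WeakHeadStep t u) : Step t u := by
  induction h with
  | beta a b => exact .beta a b
  | appL b _ ih => exact .appL b ih

theorem WeakHeadStep.unique (hu : WeakHeadStep t u) (hv : WeakHeadStep t v) : u = v := by
  induction hu generalizing v with
  | beta a b =>
    cases hv with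
    | beta => rfl
    | appL _ h => cases h
  | appL b h ih =>
    cases hv with
    | beta => cases h
    | appL _ h' => rw [ih h']

theorem WeakHeadStep.lift (h : WeakHeadStep t u) (j : ℕ) :
    WeakHeadStep (lift j t) (lift j u) := by
  induction h with
  | beta a b => exact lift_subst_of_ge a b j.zero_le ▸ .beta _ _
  | appL b _ ih => exact .appL _ ih

theorem WeakHeadStep.subst (h : WeakHeadStep t t') (k : ℕ) (u : Lam) :
    WeakHeadStep (subst t k u) (subst t' k u) := by
  induction h with
  | beta a b => exact subst_subst a b u k.zero_le ▸ .beta _ _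
  | appL b _ ih => exact .appL _ ih

theorem WeakHeadSteps.appL (b : Lam) (h : WeakHeadSteps t t') :
    WeakHeadSteps (app t b) (app t' b) :=
  Relation.ReflTransGen.lift (fun t => app t b) (fun _ _ => WeakHeadStep.appL b) _ _ h

theorem WeakHeadSteps.lift (h : WeakHeadSteps t u) (j : ℕ) :
    WeakHeadSteps (lift j t) (lift j u) :=
  Relation.ReflTransGen.lift (Lam.lift j) (fun _ _ h => h.lift j) _ _ h

theorem WeakHeadSteps.subst (h : WeakHeadSteps t t') (k : ℕ) (u : Lam) :
    WeakHeadSteps (subst t k u) (subst t' k u) :=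
  Relation.ReflTransGen.lift (fun t => Lam.subst t k u) (fun _ _ h => h.subst k u) _ _ h

/-- Standard reduction, in Kashima's inductive presentation: weak head reduction to a term with the
outermost constructor of the target, followed by standard reductions of its components. -/
inductive StandardSteps : Lam → Lam → Prop
  | var {t : Lam} (n : ℕ) : WeakHeadSteps t (var n) → StandardSteps t (var n)
  | app {t a b a' b' : Lam} : WeakHeadSteps t (app a b) → StandardSteps a a' →
      StandardSteps b b' → StandardSteps t (app a' b')
  | abs {t a a' : Lam} : WeakHeadSteps t (abs a) → StandardSteps a a' → StandardSteps t (abs a')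

namespace StandardSteps

theorem refl (t : Lam) : StandardSteps t t := by
  induction t with
  | var n => exact .var n .refl
  | app a b iha ihb => exact .app .refl iha ihb
  | abs a ih => exact .abs .refl ih

theorem of_weakHeadSteps (h : WeakHeadSteps t u) (huv : StandardSteps u v) :
    StandardSteps t v := by
  cases huv with
  | var n hu => exact .var n (h.trans hu)
  | app hu ha hb => exact .app (h.trans hu) ha hb
  | abs hu ha => exact .abs (h.trans hu) ha

theorem lift (h : StandardSteps t u) (j : ℕ) : StandardSteps (lift j t) (lift j u) := by
  induction h generalizing j with
  | var n ht => exact of_weakHeadSteps (ht.lift j) (refl _)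
  | app ht _ _ iha ihb => exact .app (ht.lift j) (iha j) (ihb j)
  | abs ht _ ih => exact .abs (ht.lift j) (ih (j + 1))

theorem subst {u u' : Lam} (h : StandardSteps t t') (k : ℕ) (hu : StandardSteps u u') :
    StandardSteps (subst t k u) (subst t' k u') := by
  induction h generalizing u u' k with
  | var n ht =>
    refine of_weakHeadSteps (ht.subst k u) ?_
    simp only [Lam.subst]
    split_ifs
    exacts [hu, refl _, refl _]
  | app ht _ _ iha ihb => exact .app (ht.subst k u) (iha k hu) (ihb k hu)
  | abs ht _ ih => exact .abs (ht.subst k u) (ih (k + 1) (hu.lift 0))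

theorem tail (h : StandardSteps t u) (huv : Step u v) : StandardSteps t v := by
  induction huv generalizing t with
  | beta a b =>
    obtain _ | ⟨ht, hab, hb⟩ | _ := h
    obtain _ | _ | ⟨hab, ha⟩ := hab
    exact of_weakHeadSteps ((ht.trans (hab.appL _)).tail (.beta _ _)) (ha.subst 0 hb)
  | appL b _ ih =>
    obtain _ | ⟨ht, ha, hb⟩ | _ := h
    exact .app ht (ih ha) hb
  | appR a _ ih =>
    obtain _ | ⟨ht, ha, hb⟩ | _ := h
    exact .app ht ha (ih hb)
  | abs _ ih =>
    obtain _ | _ | ⟨ht, ha⟩ := h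
    exact .abs ht (ih ha)

end StandardSteps

theorem Steps.standardSteps (h : Steps t u) : StandardSteps t u := by
  induction h with
  | refl => exact .refl _
  | tail _ h ih => exact ih.tail h

/-! ### Head normalisation -/

/-- `HeadedBy z n t`: the term `t` is the variable `z` applied to exactly `n` arguments. -/
inductive HeadedBy (z : ℕ) : ℕ → Lam → Prop
  | var : HeadedBy z 0 (var z)
  | app {n : ℕ} {a : Lam} (b : Lam) : HeadedBy z n a → HeadedBy z (n + 1) (app a b)

namespace HeadedBy

theorem unique {z' n' : ℕ} (h : HeadedBy z n t) (h' : HeadedBy z' n' t) : z = z' ∧ n = n' := by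
  induction h generalizing n' with
  | var => cases h'; exact ⟨rfl, rfl⟩
  | app b _ ih =>
    cases h' with
    | app _ h' => exact (ih h').imp_right (congrArg (· + 1))

theorem not_weakHeadStep (h : HeadedBy z n t) : ¬ WeakHeadStep t u := by
  induction h generalizing u with
  | var => rintro ⟨⟩
  | app b h ih =>
    rintro (_ | ⟨_, h'⟩)
    · cases h
    · exact ih h'

theorem of_step (h : HeadedBy z n t) (hs : Step t u) : HeadedBy z n u := by
  induction h generalizing u with
  | var => cases hs
  | app b h ih =>
    cases hs with
    | beta => cases h
    | appL _ ha => exact .app _ (ih ha)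
    | appR => exact .app _ h

theorem subst (h : HeadedBy z n t) (hz : Lam.subst (.var z) k u = .var y) :
    HeadedBy y n (Lam.subst t k u) := by
  induction h with
  | var => exact hz ▸ .var
  | app b _ ih => exact .app _ ih

theorem subst_of_le (h : HeadedBy (d + 1) n t) (hk : k ≤ d) (u : Lam) :
    HeadedBy d n (Lam.subst t k u) :=
  h.subst (by grind [Lam.subst])

theorem lift (h : HeadedBy d n t) (hj : j ≤ d) : HeadedBy (d + 1) n (Lam.lift j t) := by
  induction h with
  | var => simpa only [Lam.lift, hj.not_gt, if_false] using HeadedBy.var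
  | app b _ ih => exact .app _ ih

theorem headVarApp (h : HeadedBy z n t) : HeadVarApp t := by
  induction h with
  | var => exact .var _
  | app b _ ih => exact .app b ih

theorem isHNF (h : HeadedBy z n t) : IsHNF t := .head h.headVarApp

theorem exists_weakHeadSteps_of_standardSteps (h : HeadedBy z n u) (hs : StandardSteps t u) :
    ∃ t', WeakHeadSteps t t' ∧ HeadedBy z n t' := by
  induction h generalizing t with
  | var =>
    obtain ⟨_, ht⟩ | _ | _ := hs
    exact ⟨_, ht, .var⟩
  | app b _ ih =>
    obtain _ | ⟨ht, ha, -⟩ | _ := hs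
    obtain ⟨a', haa', ha'⟩ := ih ha
    exact ⟨_, ht.trans (haa'.appL _), .app _ ha'⟩

end HeadedBy

theorem HeadVarApp.exists_headedBy (h : HeadVarApp t) : ∃ z n, HeadedBy z n t := by
  induction h with
  | var n => exact ⟨n, 0, .var⟩
  | app b _ ih =>
    obtain ⟨z, n, h⟩ := ih
    exact ⟨z, n + 1, .app b h⟩

theorem headedBy_or_abs_or_weakHeadStep (t : Lam) :
    (∃ z n, HeadedBy z n t) ∨ (∃ a, t = abs a) ∨ ∃ t', WeakHeadStep t t' := by
  induction t with
  | var n => exact .inl ⟨n, 0, .var⟩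
  | abs a => exact .inr (.inl ⟨a, rfl⟩)
  | app a b iha =>
    rcases iha with ⟨z, n, h⟩ | ⟨a, rfl⟩ | ⟨a', h⟩
    · exact .inl ⟨z, n + 1, .app b h⟩
    · exact .inr (.inr ⟨_, .beta a b⟩)
    · exact .inr (.inr ⟨_, .appL b h⟩)

/-- `HeadNormalizes B d t`: head reduction of `t` stops at a head normal form whose head variable
either differs from `d` (an index seen from the root of `t`) or has a number of arguments in `B`. -/
inductive HeadNormalizes (B : Set ℕ) : ℕ → Lam → Prop
  | head {d z n : ℕ} {t : Lam} : HeadedBy z n t → (z = d → n ∈ B) → HeadNormalizes B d t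
  | abs {d : ℕ} {a : Lam} : HeadNormalizes B (d + 1) a → HeadNormalizes B d (abs a)
  | step {d : ℕ} {t t' : Lam} : WeakHeadStep t t' → HeadNormalizes B d t' → HeadNormalizes B d t

namespace HeadNormalizes

theorem mem_of_headedBy (h : HeadNormalizes B d t) (ht : HeadedBy d n t) : n ∈ B := by
  cases h with
  | head ht' hB =>
    obtain ⟨rfl, rfl⟩ := ht'.unique ht
    exact hB rfl
  | abs => cases ht
  | step hs => exact absurd hs ht.not_weakHeadStep

theorem of_weakHeadSteps (h : HeadNormalizes B d u) (hs : WeakHeadSteps t u) :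
    HeadNormalizes B d t := by
  induction hs using Relation.ReflTransGen.head_induction_on with
  | refl => exact h
  | head hs _ ih => exact .step hs ih

theorem of_standardSteps (h : HeadNormalizes B d u) (hs : StandardSteps t u) :
    HeadNormalizes B d t := by
  induction h generalizing t with
  | head hu hB =>
    obtain ⟨t', htt', ht'⟩ := hu.exists_weakHeadSteps_of_standardSteps hs
    exact of_weakHeadSteps (.head ht' hB) htt'
  | abs _ ih =>
    obtain _ | _ | ⟨ht, ha⟩ := hs
    exact of_weakHeadSteps (.abs (ih ha)) ht
  | step hu _ ih => exact ih (hs.tail hu.step)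

theorem of_steps (h : HeadNormalizes B d u) (hs : Steps t u) : HeadNormalizes B d t :=
  h.of_standardSteps hs.standardSteps

theorem of_subst_of_headedBy (h : HeadNormalizes B d (subst t k u)) (hk : k ≤ d)
    (ht : HeadedBy z n t) : HeadNormalizes B (d + 1) t :=
  .head ht fun hz => h.mem_of_headedBy ((hz ▸ ht).subst_of_le hk u)

theorem of_subst (h : HeadNormalizes B d (subst t k u)) (hk : k ≤ d) :
    HeadNormalizes B (d + 1) t := by
  generalize hv : subst t k u = v at h
  induction h generalizing t k u with
  | head hv' hB =>
    subst hv
    rcases t.headedBy_or_abs_or_weakHeadStep with ⟨z, n, ht⟩ | ⟨a, rfl⟩ | ⟨t', ht⟩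
    · exact of_subst_of_headedBy (.head hv' hB) hk ht
    · cases hv'
    · exact absurd (ht.subst k u) hv'.not_weakHeadStep
  | abs ha ih =>
    rcases t.headedBy_or_abs_or_weakHeadStep with ⟨z, n, ht⟩ | ⟨a, rfl⟩ | ⟨t', ht⟩
    · exact of_subst_of_headedBy (hv ▸ HeadNormalizes.abs ha :) hk ht
    · exact .abs (ih (Nat.succ_le_succ hk) (abs.inj hv))
    · cases hv ▸ ht.subst k u
  | step hs hv' ih =>
    subst hv
    rcases t.headedBy_or_abs_or_weakHeadStep with ⟨z, n, ht⟩ | ⟨a, rfl⟩ | ⟨t', ht⟩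
    · exact of_subst_of_headedBy (.step hs hv') hk ht
    · cases hs
    · exact .step ht (ih hk ((ht.subst k u).unique hs))

theorem subst_var (h : HeadNormalizes B (d + 1) t) (hk : k ≤ d) (hm : m ≠ d) :
    HeadNormalizes B d (subst t k (var m)) := by
  generalize he : d + 1 = e at h
  induction h generalizing d k m with
  | @head _ z _ _ ht hB =>
    obtain ⟨y, hy, hyd⟩ : ∃ y, subst (var z) k (var m) = var y ∧ (y = d → z = d + 1) := by
      simp only [subst]
      split_ifs
      all_goals exact ⟨_, rfl, by omega⟩
    exact .head (ht.subst hy) fun h => hB (by rw [hyd h, he])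
  | abs _ ih =>
    exact .abs (ih (Nat.succ_le_succ hk) (Nat.succ_ne_succ_iff.2 hm) (congrArg (· + 1) he))
  | step hs _ ih => exact .step (hs.subst k _) (ih hk hm he)

theorem of_lift (h : HeadNormalizes B (d + 1) (lift j t)) (hj : j ≤ d) :
    HeadNormalizes B d t :=
  subst_lift t (var (d + 1)) j ▸ h.subst_var hj d.succ_ne_self

theorem of_app (hB : IsLowerSet B) (h : HeadNormalizes B d (app a b)) :
    HeadNormalizes B d a := by
  generalize hv : app a b = v at h
  induction h generalizing a with
  | head hv' hmem =>
    subst hv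
    obtain _ | ⟨_, ha⟩ := hv'
    exact .head ha fun hz => hB (Nat.le_succ _) (hmem hz)
  | abs => cases hv
  | step hs hv' ih =>
    subst hv
    cases hs with
    | beta => exact .abs (of_subst hv' (Nat.zero_le _))
    | appL _ ha => exact .step ha (ih rfl)

end HeadNormalizes

theorem IsHNF.solvable (h : IsHNF t) : Solvable t := ⟨t, .refl, h⟩

theorem Solvable.of_steps (h : Solvable u) (hs : Steps t u) : Solvable t :=
  let ⟨v, huv, hv⟩ := h
  ⟨v, hs.trans huv, hv⟩

theorem Solvable.abs (h : Solvable a) : Solvable (Lam.abs a) :=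
  let ⟨_, hs, hv⟩ := h
  ⟨_, hs.abs, .abs hv⟩

theorem solvable_iff_headNormalizes (d : ℕ) : Solvable t ↔ HeadNormalizes .univ d t := by
  constructor
  · rintro ⟨u, hs, hu⟩
    refine .of_steps ?_ hs
    clear hs
    induction hu generalizing d with
    | head h =>
      obtain ⟨z, n, h⟩ := h.exists_headedBy
      exact .head h fun _ => Set.mem_univ n
    | abs _ ih => exact .abs (ih _)
  · intro h
    induction h with
    | head ht _ => exact ht.isHNF.solvable
    | abs _ ih => exact ih.abs
    | step hs _ ih => exact ih.of_steps hs.step.steps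

theorem Solvable.of_subst (h : Solvable (subst t k u)) : Solvable t :=
  (solvable_iff_headNormalizes (k + 1)).2 (((solvable_iff_headNormalizes k).1 h).of_subst le_rfl)

theorem Solvable.of_lift (h : Solvable (lift j t)) : Solvable t :=
  (solvable_iff_headNormalizes j).2 (((solvable_iff_headNormalizes (j + 1)).1 h).of_lift le_rfl)

theorem Normal.isHNF (h : Normal t) : IsHNF t := by
  induction t with
  | var n => exact .head (.var n)
  | abs a ih => exact .abs (ih fun a' ha => h _ (.abs ha))
  | app a b =>
    rcases (app a b).headedBy_or_abs_or_weakHeadStep with ⟨z, n, ht⟩ | ⟨_, ⟨⟩⟩ | ⟨t', ht⟩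
    · exact ht.isHNF
    · exact absurd ht.step (h t')

theorem Normal.not_omegaStep (h : Normal t) : ¬ OmegaStep t u := by
  intro hs
  induction hs with
  | unsolv ht => exact ht h.isHNF.solvable
  | appL b _ ih => exact ih fun a' ha => h _ (.appL b ha)
  | appR a _ ih => exact ih fun b' hb => h _ (.appR a hb)
  | abs _ ih => exact ih fun a' ha => h _ (.abs ha)

/-! ### The term `λx₁…λx_m λz.(z y)` -/

/-- The term `λx₁…λx_m λz.(z y)`, which swallows `m` arguments; `A'` is `absorber l ν`. -/
def absorber (m y : ℕ) : Lam := absN m (abs (app (var 0) (var (y + m + 1))))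

theorem absorber_succ (m y : ℕ) : absorber (m + 1) y = abs (absorber m (y + 1)) := by
  simp only [absorber, absN, show y + (m + 1) = y + 1 + m by omega]

theorem lift_absorber (m : ℕ) (hj : j ≤ y) : lift j (absorber m y) = absorber m (y + 1) := by
  induction m generalizing y j with
  | zero => grind [absorber, absN, lift]
  | succ m ih => simp only [absorber_succ, lift, ih (Nat.succ_le_succ hj)]

theorem subst_absorber (m : ℕ) (hk : k ≤ y) (u : Lam) :
    subst (absorber m (y + 1)) k u = absorber m y := by
  induction m generalizing y k u with
  | zero => grind [absorber, absN, subst]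
  | succ m ih => simp only [absorber_succ, subst, ih (Nat.succ_le_succ hk)]

theorem step_app_absorber_succ (m y : ℕ) (u : Lam) :
    Step (app (absorber (m + 1) y) u) (absorber m y) := by
  simpa only [absorber_succ, subst_absorber m y.zero_le u]
    using Step.beta (absorber m (y + 1)) u

theorem normal_absorber (m y : ℕ) : Normal (absorber m y) := by
  induction m generalizing y with
  | zero => rintro _ (_ | _ | _ | (_ | ⟨_, ⟨⟩⟩ | ⟨_, ⟨⟩⟩))
  | succ m ih =>
    rw [absorber_succ]
    rintro _ (_ | _ | _ | h)
    exact ih _ _ h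

theorem free_absorber (m y : ℕ) : Free y (absorber m y) := by
  induction m generalizing y with
  | zero => exact .inr rfl
  | succ m ih => exact absorber_succ m y ▸ ih (y + 1)

/-! ### Replaying reductions of `G[x:=A']` in `G` -/

/-- `Mimics l ν d G M`, where `x` has index `d` in `G`: the term `M` is obtained from `G[x:=A']` by
letting `A'` swallow arguments and by replacing arbitrarily the images of some subterms of `G`
without a head normal form other than `λ⃗y.(x V)` with more than `l` arguments.  The indices above
`d` decrease by one since `x` disappears. -/
inductive Mimics (l ν : ℕ) : ℕ → Lam → Lam → Prop
  | varLT {d y : ℕ} : y < d → Mimics l ν d (var y) (var y)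
  | varGE {d y : ℕ} : d ≤ y → Mimics l ν d (var (y + 1)) (var y)
  | app {d : ℕ} {a b a' b' : Lam} :
      Mimics l ν d a a' → Mimics l ν d b b' → Mimics l ν d (app a b) (app a' b')
  | abs {d : ℕ} {a a' : Lam} : Mimics l ν (d + 1) a a' → Mimics l ν d (abs a) (abs a')
  | swallow {d n m : ℕ} {G : Lam} :
      HeadedBy d n G → n + m = l → Mimics l ν d G (absorber m (ν + d))
  | dead {d : ℕ} {G M : Lam} : ¬ HeadNormalizes (Set.Iic l) d G → Mimics l ν d G M

namespace Mimics

theorem lift (h : Mimics l ν d G M) (hj : j ≤ d) :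
    Mimics l ν (d + 1) (lift j G) (lift j M) := by
  induction h generalizing j with
  | varLT hy =>
    simp only [Lam.lift]
    split_ifs
    all_goals exact .varLT (by omega)
  | varGE hy =>
    simp only [Lam.lift, (hj.trans hy).not_gt, (Nat.le_succ_of_le (hj.trans hy)).not_gt, if_false]
    exact .varGE (Nat.succ_le_succ hy)
  | app _ _ iha ihb => exact .app (iha hj) (ihb hj)
  | abs _ ih => exact .abs (ih (Nat.succ_le_succ hj))
  | swallow hG hl =>
    rw [lift_absorber _ (by omega)]
    exact .swallow (hG.lift hj) hl
  | dead hG => exact .dead fun h => hG (h.of_lift hj)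

theorem subst (h : Mimics l ν (d + 1) G M) (hk : k ≤ d) (hbc : Mimics l ν d b c) :
    Mimics l ν d (subst G k b) (subst M k c) := by
  generalize he : d + 1 = e at h
  induction h generalizing d b c k with
  | varLT hy =>
    simp only [Lam.subst]
    split_ifs
    exacts [hbc, .varLT (by omega), .varLT (by omega)]
  | @varGE _ y hy =>
    obtain ⟨y, rfl⟩ : ∃ y', y = y' + 1 := ⟨y - 1, by omega⟩
    simpa [Lam.subst, show y + 1 ≠ k by omega, show y + 1 + 1 ≠ k by omega,
      show k < y + 1 by omega, show k < y + 1 + 1 by omega]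
      using Mimics.varGE (l := l) (ν := ν) (show d ≤ y by omega)
  | app _ _ iha ihb => exact .app (iha hk hbc he) (ihb hk hbc he)
  | abs _ ih =>
    exact .abs (ih (Nat.succ_le_succ hk) (hbc.lift d.zero_le) (congrArg (· + 1) he))
  | swallow hG hl =>
    subst he
    rw [← add_assoc, Lam.subst_absorber _ (by omega)]
    exact .swallow (hG.subst_of_le hk b) hl
  | dead hG =>
    subst he
    exact .dead fun h => hG (h.of_subst hk)

theorem subst_absorber (t : Lam) (d : ℕ) :
    Mimics l ν d t (Lam.subst t d (absorber l (ν + d))) := by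
  induction t generalizing d with
  | var n =>
    simp only [Lam.subst]
    split_ifs with hn hd
    · exact hn ▸ .swallow .var (zero_add l)
    · obtain ⟨y, rfl⟩ : ∃ y, n = y + 1 := ⟨n - 1, by omega⟩
      exact .varGE (by omega)
    · exact .varLT (by omega)
  | app a b iha ihb => exact .app (iha d) (ihb d)
  | abs a ih =>
    rw [Lam.subst, lift_absorber _ (Nat.zero_le _)]
    exact .abs (ih (d + 1))

theorem exists_of_step_left {G' : Lam} (h : Mimics l ν d G M) (hs : Step G G') :
    ∃ M', Steps M M' ∧ Mimics l ν d G' M' := by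
  induction h generalizing G' with
  | varLT | varGE => cases hs
  | app ha hb iha ihb =>
    cases hs with
    | beta a b =>
      cases ha with
      | abs ha => exact ⟨_, (Step.beta _ _).steps, ha.subst (Nat.zero_le _) hb⟩
      | swallow ha => cases ha
      | dead ha => exact ⟨_, .refl, .dead fun h => ha (.abs (h.of_subst (Nat.zero_le _)))⟩
    | appL _ hs =>
      obtain ⟨a', haa', ha'⟩ := iha hs
      exact ⟨_, haa'.appL _, .app ha' hb⟩
    | appR _ hs =>
      obtain ⟨b', hbb', hb'⟩ := ihb hs
      exact ⟨_, hbb'.appR _, .app ha hb'⟩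
  | abs _ ih =>
    obtain _ | _ | _ | hs := hs
    obtain ⟨a', haa', ha'⟩ := ih hs
    exact ⟨_, haa'.abs, .abs ha'⟩
  | swallow hG hl => exact ⟨_, .refl, .swallow (hG.of_step hs) hl⟩
  | dead hG => exact ⟨_, .refl, .dead fun h => hG (h.of_steps hs.steps)⟩

theorem steps_absorber (h : Mimics l ν d G M) (hG : HeadedBy d n G) (hl : n + m = l) :
    Steps M (absorber m (ν + d)) := by
  induction hG generalizing M m with
  | var =>
    cases h with
    | varLT hy | varGE hy => omega
    | swallow hG hl' =>
      obtain ⟨-, rfl⟩ := HeadedBy.var.unique hG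
      obtain rfl := Nat.add_left_cancel (hl.trans hl'.symm)
      exact .refl
    | dead hG => exact absurd (.head .var fun _ => Nat.zero_le l) hG
  | app b hG ih =>
    cases h with
    | app ha _ =>
      exact ((ih ha (m := m + 1) (by omega)).appL _).tail (step_app_absorber_succ _ _ _)
    | swallow hG' hl' =>
      obtain ⟨-, rfl⟩ := (hG.app b).unique hG'
      obtain rfl := Nat.add_left_cancel (hl.trans hl'.symm)
      exact .refl
    | dead hG' =>
      exact absurd (.head (hG.app b) fun _ => Set.mem_Iic.2 (hl ▸ Nat.le_add_right _ _)) hG'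

theorem headVarApp (h : Mimics l ν d G M) (hG : HeadedBy z n G) (hz : z ≠ d) :
    HeadVarApp M := by
  induction hG generalizing M with
  | var =>
    cases h with
    | varLT | varGE => exact .var _
    | swallow hG => exact absurd (HeadedBy.var.unique hG).1 hz
    | dead hG => exact absurd (.head .var fun h => absurd h hz) hG
  | app b hG ih =>
    cases h with
    | app ha _ => exact .app _ (ih ha)
    | swallow hG' => exact absurd ((hG.app b).unique hG').1 hz
    | dead hG' => exact absurd (.head (hG.app b) fun h => absurd h hz) hG'

theorem solvable (h : Mimics l ν d G M) (hG : HeadNormalizes (Set.Iic l) d G) :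
    Solvable M := by
  induction hG generalizing M with
  | @head d z n G hG hle =>
    by_cases hz : z = d
    · subst hz
      obtain ⟨m, hm⟩ := Nat.exists_eq_add_of_le (hle rfl)
      exact (normal_absorber _ _).isHNF.solvable.of_steps (h.steps_absorber hG hm.symm)
    · exact (IsHNF.head (h.headVarApp hG hz)).solvable
  | abs hG ih =>
    cases h with
    | abs ha => exact (ih ha).abs
    | swallow hG => cases hG
    | dead hG' => exact absurd (.abs hG) hG'
  | step hs _ ih =>
    obtain ⟨M', hMM', hM'⟩ := h.exists_of_step_left hs.step
    exact (ih hM').of_steps hMM'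

theorem exists_of_beta (ha : Mimics l ν d a (Lam.abs M)) (hbc : Mimics l ν d b c) :
    ∃ G', Steps (Lam.app a b) G' ∧ Mimics l ν d G' (Lam.subst M 0 c) := by
  generalize hq : Lam.abs M = q at ha
  cases ha with
  | varLT | varGE | app => cases hq
  | abs ha =>
    obtain rfl := abs.inj hq
    exact ⟨_, (Step.beta _ _).steps, ha.subst d.zero_le hbc⟩
  | @swallow _ n m _ ha hl =>
    refine ⟨_, .refl, ?_⟩
    cases m with
    | zero => exact .dead fun h => absurd (h.mem_of_headedBy (ha.app b)) (by simp; omega)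
    | succ m =>
      rw [absorber_succ, abs.injEq] at hq
      rw [hq, Lam.subst_absorber m (Nat.zero_le _)]
      exact .swallow (ha.app b) (by omega)
  | dead ha => exact ⟨_, .refl, .dead fun h => ha (h.of_app (isLowerSet_Iic l))⟩

theorem exists_of_step (h : Mimics l ν d G M) (hs : Step M M') :
    ∃ G', Steps G G' ∧ Mimics l ν d G' M' := by
  induction h generalizing M' with
  | varLT | varGE => cases hs
  | app ha hb iha ihb =>
    cases hs with
    | beta => exact ha.exists_of_beta hb
    | appL _ hs =>
      obtain ⟨a', haa', ha'⟩ := iha hs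
      exact ⟨_, haa'.appL _, .app ha' hb⟩
    | appR _ hs =>
      obtain ⟨b', hbb', hb'⟩ := ihb hs
      exact ⟨_, hbb'.appR _, .app ha hb'⟩
  | abs _ ih =>
    obtain _ | _ | _ | hs := hs
    obtain ⟨a', haa', ha'⟩ := ih hs
    exact ⟨_, haa'.abs, .abs ha'⟩
  | swallow => exact absurd hs (normal_absorber _ _ _)
  | dead hG => exact ⟨_, .refl, .dead hG⟩

theorem of_not_solvable (h : Mimics l ν d G M) (hM : ¬ Solvable M) (M' : Lam) :
    Mimics l ν d G M' :=
  .dead fun hG => hM (h.solvable hG)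

theorem of_omegaStep (h : Mimics l ν d G M) (hs : OmegaStep M M') : Mimics l ν d G M' := by
  induction h generalizing M' with
  | varLT | varGE => exact absurd hs (Normal.not_omegaStep (by rintro _ ⟨⟩))
  | app ha hb iha ihb =>
    cases hs with
    | unsolv hM => exact (ha.app hb).of_not_solvable hM _
    | appL _ hs => exact .app (iha hs) hb
    | appR _ hs => exact .app ha (ihb hs)
  | abs ha ih =>
    cases hs with
    | unsolv hM => exact ha.abs.of_not_solvable hM _
    | abs hs => exact .abs (ih hs)
  | swallow => exact absurd hs (normal_absorber _ _).not_omegaStep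
  | dead hG => exact .dead hG

theorem exists_of_boSteps (h : Mimics l ν d G M) (hs : BOSteps M M') :
    ∃ G', Steps G G' ∧ Mimics l ν d G' M' := by
  induction hs with
  | refl => exact ⟨_, .refl, h⟩
  | tail _ hs ih =>
    obtain ⟨G', hGG', hG'⟩ := ih
    rcases hs with hs | hs
    · obtain ⟨G'', hG'G'', hG''⟩ := hG'.exists_of_step hs
      exact ⟨_, hGG'.trans hG'G'', hG''⟩
    · exact ⟨_, hGG', hG'.of_omegaStep hs⟩

end Mimics

/-! ### Suppressed variables -/

/-- `Suppressed l d G`: every occurrence in `G` of the variable `d` lies in an unsolvable subterm,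
or in a subterm consisting of this variable applied to more than `l` arguments. -/
inductive Suppressed (l : ℕ) : ℕ → Lam → Prop
  | var {d y : ℕ} : y ≠ d → Suppressed l d (var y)
  | app {d : ℕ} {a b : Lam} : Suppressed l d a → Suppressed l d b → Suppressed l d (app a b)
  | abs {d : ℕ} {a : Lam} : Suppressed l (d + 1) a → Suppressed l d (abs a)
  | unsolv {d : ℕ} {G : Lam} : ¬ Solvable G → Suppressed l d G
  | long {d n : ℕ} {G : Lam} : HeadedBy d n G → l < n → Suppressed l d G

namespace Suppressed

theorem lift (h : Suppressed l d G) (hj : j ≤ d) : Suppressed l (d + 1) (lift j G) := by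
  induction h generalizing j with
  | var hy =>
    simp only [Lam.lift]
    split_ifs
    all_goals exact .var (by omega)
  | app _ _ iha ihb => exact .app (iha hj) (ihb hj)
  | abs _ ih => exact .abs (ih (Nat.succ_le_succ hj))
  | unsolv hG => exact .unsolv fun h => hG h.of_lift
  | long hG hn => exact .long (hG.lift hj) hn

theorem subst (h : Suppressed l (d + 1) G) (hk : k ≤ d) (hb : Suppressed l d b) :
    Suppressed l d (subst G k b) := by
  generalize he : d + 1 = e at h
  induction h generalizing d b k with
  | var hy =>
    simp only [Lam.subst]
    split_ifs
    exacts [hb, .var (by omega), .var (by omega)]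
  | app _ _ iha ihb => exact .app (iha hk hb he) (ihb hk hb he)
  | abs _ ih =>
    exact .abs (ih (Nat.succ_le_succ hk) (hb.lift d.zero_le) (congrArg (· + 1) he))
  | unsolv hG => exact .unsolv fun h => hG h.of_subst
  | long hG hn => exact .long ((he ▸ hG).subst_of_le hk b) hn

theorem of_step {G' : Lam} (h : Suppressed l d G) (hs : Step G G') : Suppressed l d G' := by
  induction h generalizing G' with
  | var => cases hs
  | app ha hb iha ihb =>
    cases hs with
    | beta =>
      cases ha with
      | abs ha => exact ha.subst (Nat.zero_le _) hb
      | unsolv ha => exact .unsolv fun h => ha h.of_subst.abs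
      | long ha => cases ha
    | appL _ hs => exact .app (iha hs) hb
    | appR _ hs => exact .app ha (ihb hs)
  | abs _ ih =>
    obtain _ | _ | _ | hs := hs
    exact .abs (ih hs)
  | unsolv hG => exact .unsolv fun h => hG (h.of_steps hs.steps)
  | long hG hn => exact .long (hG.of_step hs) hn

theorem of_steps {G' : Lam} (h : Suppressed l d G) (hs : Steps G G') : Suppressed l d G' := by
  induction hs with
  | refl => exact h
  | tail _ hs ih => exact ih.of_step hs

theorem exists_of_not_headNormalizes (h : ¬ HeadNormalizes (Set.Iic l) d G) :
    ∃ G', Steps G G' ∧ Suppressed l d G' := by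
  by_cases hG : Solvable G
  · rw [solvable_iff_headNormalizes d] at hG
    induction hG with
    | head hG =>
      obtain ⟨rfl, hn⟩ := Classical.not_imp.1 fun hle => h (.head hG hle)
      exact ⟨_, .refl, .long hG (not_le.1 hn)⟩
    | abs _ ih =>
      obtain ⟨a', haa', ha'⟩ := ih fun ha => h (.abs ha)
      exact ⟨_, haa'.abs, .abs ha'⟩
    | step hs _ ih =>
      obtain ⟨G', hGG', hG'⟩ := ih fun hG => h (.step hs hG)
      exact ⟨_, .head hs.step hGG', hG'⟩
  · exact ⟨_, .refl, .unsolv hG⟩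

end Suppressed

theorem Mimics.exists_suppressed (h : Mimics l ν d G M) (hν : ¬ Free (ν + d) M) :
    ∃ G', Steps G G' ∧ Suppressed l d G' := by
  induction h with
  | varLT | varGE => exact ⟨_, .refl, .var (by omega)⟩
  | app _ _ iha ihb =>
    obtain ⟨a', haa', ha'⟩ := iha fun h => hν (.inl h)
    obtain ⟨b', hbb', hb'⟩ := ihb fun h => hν (.inr h)
    exact ⟨_, haa'.app hbb', .app ha' hb'⟩
  | abs _ ih =>
    obtain ⟨a', haa', ha'⟩ := ih hν
    exact ⟨_, haa'.abs, .abs ha'⟩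
  | swallow => exact absurd (free_absorber _ _) hν
  | dead hG => exact Suppressed.exists_of_not_headNormalizes hG

/-! ### Occurrences -/

theorem OccOf.ne_of_var (h : OccOf d (var y) p) : y = d := by
  cases p <;> simp_all [OccOf, subtermAt]

theorem OccOf.exists_of_app (h : OccOf d (app a b) p) :
    (∃ p', p = .left :: p' ∧ OccOf d a p') ∨ ∃ p', p = .right :: p' ∧ OccOf d b p' := by
  rcases p with _ | ⟨_ | _ | _, p⟩ <;> simp_all [OccOf, subtermAt]

theorem OccOf.exists_of_abs (h : OccOf d (abs a) p) :
    ∃ p', p = .down :: p' ∧ OccOf (d + 1) a p' := by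
  rcases p with _ | ⟨_ | _ | _, p⟩ <;>
    simp_all [OccOf, subtermAt, add_left_comm, add_comm]

theorem subtermAt_nil (t : Lam) : subtermAt t [] = some t := by cases t <;> rfl

theorem subtermAt_append (h : subtermAt t q = some s) (r : Pos) :
    subtermAt t (q ++ r) = subtermAt s r := by
  induction q generalizing t with
  | nil => rw [List.nil_append, Option.some.inj ((subtermAt_nil t).symm.trans h)]
  | cons c q ih => cases t <;> cases c <;> first | exact ih h | cases h

theorem HeadedBy.subtermAt_replicate_left (h : HeadedBy z n s) :
    subtermAt s (.replicate n .left) = some (Lam.var z) := by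
  induction h with
  | var => rfl
  | app _ _ ih => exact ih

theorem HeadedBy.eq_replicate_left_or_of_subtermAt (h : HeadedBy z n s)
    (hp : subtermAt s p = some (Lam.var y)) :
    p = .replicate n .left ∨ ∃ j r, j < n ∧ p = .replicate j .left ++ .right :: r := by
  induction h generalizing p with
  | var =>
    rcases p with _ | ⟨c, p⟩
    · exact .inl rfl
    · simp [subtermAt] at hp
  | app b _ ih =>
    rcases p with _ | ⟨_ | _ | _, p⟩
    · cases hp
    · rcases ih hp with rfl | ⟨j, r, hj, rfl⟩
      · exact .inl rfl
      · exact .inr ⟨j + 1, r, Nat.succ_lt_succ hj, rfl⟩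
    · exact .inr ⟨0, p, Nat.succ_pos _, rfl⟩
    · cases hp

theorem exists_eq_append_replicate_left (q : Pos) :
    ∃ (r : Pos) (m : ℕ), q = r ++ .replicate m .left ∧ ∀ r' : Pos, r ≠ r' ++ [.left] := by
  induction q using List.reverseRecOn with
  | nil => exact ⟨[], 0, rfl, by simp⟩
  | append_singleton q c ih =>
    by_cases hc : c = .left
    · obtain ⟨r, m, rfl, hr⟩ := ih
      exact ⟨r, m + 1, by rw [hc, List.replicate_succ', List.append_assoc], hr⟩
    · exact ⟨q ++ [c], 0, by simp, fun r' h => hc (by simpa using (List.append_inj' h rfl).2)⟩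

theorem ArgOf.le_length (h : ArgOf t (q ++ .replicate n .left) U) : n ≤ U.length := by
  obtain ⟨r, _, hqr, hr, -⟩ := h
  by_contra! hlt
  obtain ⟨m, rfl⟩ := Nat.exists_eq_add_of_lt hlt
  rw [show U.length + m + 1 = m + 1 + U.length by omega, ← List.replicate_append_replicate,
    ← List.append_assoc, List.append_cancel_right_eq, List.replicate_succ',
    ← List.append_assoc] at hqr
  exact hr _ hqr.symm

theorem HeadedBy.not_pureOcc (h : HeadedBy (x + q.count .down) n s)
    (hs : subtermAt t q = some s) (hj : j < n) :
    ¬ PureOcc x t (q ++ (.replicate j .left ++ .right :: r)) := by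
  intro hpure
  have hocc : OccOf x t (q ++ .replicate n .left) := by
    rw [OccOf, subtermAt_append hs, h.subtermAt_replicate_left]
    simp [List.count_replicate]
  have hne : q ++ .replicate n .left ≠ q ++ (.replicate j .left ++ .right :: r) := fun heq => by
    have hmem : Dir.right ∈ List.replicate n Dir.left := by simp [List.append_cancel_left heq]
    cases List.eq_of_mem_replicate hmem
  obtain ⟨r₀, m, rfl, hr₀⟩ := exists_eq_append_replicate_left q
  refine hpure.2 _ hne ⟨hocc, r₀, m + n, ?_, hr₀, m + j, r, by omega, ?_⟩
  all_goals simp only [← List.replicate_append_replicate, List.append_assoc]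

theorem Suppressed.exists_subtermAt (h : Suppressed l d G) (hp : OccOf d G p) :
    ∃ q s, q <+: p ∧ subtermAt G q = some s ∧
      (¬ Solvable s ∨ ∃ n, l < n ∧ HeadedBy (d + q.count .down) n s) := by
  induction h generalizing p with
  | var hy => exact absurd hp.ne_of_var hy
  | app _ _ iha ihb =>
    rcases hp.exists_of_app with ⟨p, rfl, hp'⟩ | ⟨p, rfl, hp'⟩
    · obtain ⟨q, s, hq, hs, hbad⟩ := iha hp'
      exact ⟨.left :: q, s, (List.prefix_cons_inj _).2 hq, hs, by simpa using hbad⟩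
    · obtain ⟨q, s, hq, hs, hbad⟩ := ihb hp'
      exact ⟨.right :: q, s, (List.prefix_cons_inj _).2 hq, hs, by simpa using hbad⟩
  | abs _ ih =>
    obtain ⟨p, rfl, hp'⟩ := hp.exists_of_abs
    obtain ⟨q, s, hq, hs, hbad⟩ := ih hp'
    refine ⟨.down :: q, s, (List.prefix_cons_inj _).2 hq, hs, ?_⟩
    rwa [List.count_cons_self, ← add_assoc, add_right_comm]
  | unsolv hG => exact ⟨[], _, List.nil_prefix, subtermAt_nil _, .inl hG⟩
  | long hG hn => exact ⟨[], _, List.nil_prefix, subtermAt_nil _, .inr ⟨_, hn, hG⟩⟩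

theorem Suppressed.lt_length (h : Suppressed l 0 G) (hp : GoodOcc A G p) (hU : ArgOf G p U) :
    l < U.length := by
  obtain ⟨hpure, hsol⟩ := hp
  obtain ⟨q, s, ⟨r, rfl⟩, hs, hbad⟩ := h.exists_subtermAt hpure.1
  rcases hbad with hunsolv | ⟨n, hn, hhead⟩
  · exact absurd (hsol q s (List.prefix_append q r) hs).of_subst hunsolv
  · have hr := hpure.1
    rw [OccOf, subtermAt_append hs] at hr
    rcases hhead.eq_replicate_left_or_of_subtermAt hr with rfl | ⟨j, r', hj, rfl⟩
    · exact hn.trans_le hU.le_length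
    · exact absurd hpure (hhead.not_pureOcc hs hj)

end Lam

open Lam in
theorem case1_nu_not_erased_general {F A : Lam} {l ν : ℕ}
    (hgood : ∀ G, Steps F G → ∃ H p U,
      Steps G H ∧ GoodOcc A H p ∧ ArgOf H p U ∧ U.length ≤ l) :
    ∀ t₁, BOSteps (subst F 0 (absN l (abs (app (var 0) (var (ν + l + 1)))))) t₁ → Free ν t₁ := by
  intro t₁ ht₁
  by_contra hν
  obtain ⟨G, hFG, hG⟩ := (Mimics.subst_absorber (l := l) (ν := ν) F 0).exists_of_boSteps ht₁
  obtain ⟨G', hGG', hG'⟩ := hG.exists_suppressed hν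
  obtain ⟨H, p, U, hG'H, hp, hU, hle⟩ := hgood G' (hFG.trans hGG')
  exact ((hG'.of_steps hG'H).lt_length hp hU).not_ge hle

open Lam in
/-- case 1, simple argument: let `F` be non-normalizable with unique
free variable `x` (index `0`), `x ∈ βΩ(F)`, and `A` closed with `F[x:=A] ≄ F[x:=Ω]`.
Let `(F_k)` be a cofinal reduction sequence for `F`, `(p k)` a good branch of the
associated tree, and `U_k = Arg(x_(k), F_k)`.  If `l` bounds the lengths of all the
`U_k`, then for `A' = λx₁…λx_l λz.(z ν)` (with `ν` a fresh variable, of de Bruijn index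
`ν + l + 1` under the `l + 1` binders of `A'`), the variable `ν` occurs in every `t₁`
such that `F[x:=A'] ▷_{βΩ}* t₁`, i.e. `ν ∈ βΩ(F[x:=A'])`. -/
theorem case1_nu_not_erased (F A : Lam) (Fs : ℕ → Lam) (p : ℕ → Pos)
    (U : ℕ → List Lam) (l : ℕ) (ν : ℕ)
    (hFnonnorm : ¬ ∃ N, Steps F N ∧ Normal N)
    (hFfree : Free 0 F) (hFonly : ∀ y, Free y F → y = 0)
    (hxbo : ∀ t', BOSteps F t' → Free 0 t')
    (hA : Closed A)
    (hne : ¬ SimH (subst F 0 A) (subst F 0 Omega))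
    (h0 : Fs 0 = F)
    (hstep : ∀ k, Steps (Fs k) (Fs (k + 1)))
    (hcof : ∀ G, Steps F G → ∃ k, Steps G (Fs k))
    (hgood : ∀ k, GoodOcc A (Fs k) (p k))
    (hbranch : ∀ k, Residue 0 (Fs k) (Fs (k + 1)) (p k) (p (k + 1)))
    (hU : ∀ k, ArgOf (Fs k) (p k) (U k))
    (hbound : ∀ k, (U k).length ≤ l) :
    ∀ t₁, BOSteps
        (subst F 0 (absN l (Lam.abs (Lam.app (Lam.var 0) (Lam.var (ν + l + 1)))))) t₁ →
      Free ν t₁ :=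
  case1_nu_not_erased_general fun G hG =>
    let ⟨k, hk⟩ := hcof G hG
    ⟨Fs k, p k, U k, hk, hgood k, hU k, hbound k⟩
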